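/- arXiv:2203.13336 — 2 statements merged into one kernel-verified Lean document; each statement's English description precedes it below -/
import Mathlib

section
/- For every s ∈ ℝ there exists a constant C > 0 (depending only on s) such that for all μ with 0 < μ ≤ 1 and all ξ > 0, one has | d/dξ ( √(T_μ(ξ))·⟨ξ⟩^{s}·(1+μξ²)^{1/4} ) | ≤ C·⟨ξ⟩^{s−1}. -/
/-- The symbol `T_μ(ξ) = tanh(√μ ξ)/(√μ ξ)` for `ξ > 0`. -/
noncomputable def Tpos (μ ξ : ℝ) : ℝ := Real.tanh (Real.sqrt μ * ξ) / (Real.sqrt μ * ξ)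

/-!
Up to the factor `⟨ξ⟩ ^ s`, the function is `g (√μ ξ)` for the single profile
`g y = √(tanh y / y) (1 + y²) ^ (1/4)`. This profile is bounded, and its logarithmic derivative,
half of `(1 - tanh² y) / tanh y - 1 / y + y / (1 + y²)`, decays like `1 / (1 + |y|)`: the first two
terms differ by at most `tanh² y / y`. The product rule then gains one power of `⟨ξ⟩` on each term,
and the factor `√μ` from the chain rule is absorbed by
`√μ / (1 + √μ |ξ|) ≤ max 1 √μ / (1 + |ξ|)`.
-/

open Real

lemma hasDerivAt_tanh (y : ℝ) : HasDerivAt tanh (1 - tanh y ^ 2) y := by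
  have hcosh : cosh y ≠ 0 := (cosh_pos y).ne'
  have hquot := (hasDerivAt_sinh y).div (hasDerivAt_cosh y) hcosh
  rw [show sinh / cosh = tanh from funext fun z => (tanh_eq_sinh_div_cosh z).symm] at hquot
  refine hquot.congr_deriv ?_
  rw [tanh_eq_sinh_div_cosh]
  field_simp

lemma tanh_pos {y : ℝ} (hy : 0 < y) : 0 < tanh y := by
  rw [tanh_eq_sinh_div_cosh]
  exact div_pos (sinh_pos_iff.2 hy) (cosh_pos y)

lemma tanh_le_self {y : ℝ} (hy : 0 ≤ y) : tanh y ≤ y := by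
  have hderiv (z : ℝ) : HasDerivAt (fun x => x - tanh x) (tanh z ^ 2) z :=
    ((hasDerivAt_id z).sub (hasDerivAt_tanh z)).congr_deriv (sub_sub_cancel _ _)
  have hmono : Monotone fun x => x - tanh x :=
    monotone_of_hasDerivAt_nonneg hderiv fun z => sq_nonneg (tanh z)
  simpa only [tanh_zero, sub_zero, sub_nonneg] using hmono hy

lemma abs_tanh_le_abs (y : ℝ) : |tanh y| ≤ |y| := by
  wlog hy : 0 ≤ y generalizing y
  · simpa only [tanh_neg, abs_neg] using this (-y) (by linarith)
  have htanh : 0 ≤ tanh y := by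
    rw [tanh_eq_sinh_div_cosh]
    exact div_nonneg (sinh_nonneg_iff.2 hy) (cosh_pos y).le
  simpa only [abs_of_nonneg htanh, abs_of_nonneg hy] using tanh_le_self hy

lemma tanh_div_self_pos {y : ℝ} (hy : y ≠ 0) : 0 < tanh y / y := by
  wlog hpos : 0 < y generalizing y
  · simpa only [tanh_neg, neg_div_neg_eq] using
      this (neg_ne_zero.2 hy) (neg_pos.2 (hy.lt_of_le (not_lt.1 hpos)))
  exact div_pos (tanh_pos hpos) hpos

lemma one_sub_tanh_sq_mul_self_le_tanh {y : ℝ} (hy : 0 ≤ y) : (1 - tanh y ^ 2) * y ≤ tanh y := by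
  have hcosh := cosh_pos y
  have hsech : 1 - tanh y ^ 2 = 1 / cosh y ^ 2 := by
    rw [tanh_eq_sinh_div_cosh, div_pow, one_sub_div (pow_ne_zero 2 hcosh.ne'),
      cosh_sq_sub_sinh_sq]
  have hy_le : y ≤ sinh y * cosh y :=
    (self_le_sinh_iff.2 hy).trans
      (le_mul_of_one_le_right (sinh_nonneg_iff.2 hy) (one_le_cosh y))
  calc (1 - tanh y ^ 2) * y ≤ 1 / cosh y ^ 2 * (sinh y * cosh y) := by
        rw [hsech]; gcongr
    _ = tanh y := by rw [tanh_eq_sinh_div_cosh]; field_simp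

lemma one_div_sub_one_sub_tanh_sq_div_tanh_mem_Icc {y : ℝ} (hy : 0 < y) :
    1 / y - (1 - tanh y ^ 2) / tanh y ∈ Set.Icc 0 (tanh y ^ 2 / y) := by
  have htanh := tanh_pos hy
  have hsech : 0 ≤ 1 - tanh y ^ 2 := (sub_pos.2 (tanh_sq_lt_one y)).le
  have hupper : (1 - tanh y ^ 2) / tanh y ≤ 1 / y := by
    rw [div_le_div_iff₀ htanh hy, one_mul]
    exact one_sub_tanh_sq_mul_self_le_tanh hy.le
  have hlower : (1 - tanh y ^ 2) / y ≤ (1 - tanh y ^ 2) / tanh y :=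
    div_le_div_of_nonneg_left hsech htanh (tanh_le_self hy.le)
  rw [sub_div] at hlower
  exact ⟨by linarith, by linarith⟩

lemma tanh_sq_div_self_le {y : ℝ} (hy : 0 < y) : tanh y ^ 2 / y ≤ 2 / (1 + y) := by
  have hself : tanh y ^ 2 ≤ y := by
    nlinarith [tanh_pos hy, tanh_le_self hy.le, tanh_lt_one y]
  have hone : tanh y ^ 2 * y ≤ y := mul_le_of_le_one_left hy.le (tanh_sq_lt_one y).le
  rw [div_le_div_iff₀ hy (by positivity)]
  linarith

lemma abs_one_sub_tanh_sq_div_tanh_sub_one_div_add_le {y : ℝ} (hy : y ≠ 0) :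
    |(1 - tanh y ^ 2) / tanh y - 1 / y + y / (1 + y ^ 2)| ≤ 2 / (1 + |y|) := by
  wlog hpos : 0 < y generalizing y
  · have hneg := this (neg_ne_zero.2 hy) (neg_pos.2 (hy.lt_of_le (not_lt.1 hpos)))
    rw [tanh_neg, neg_sq, neg_sq, abs_neg, div_neg, div_neg, neg_div] at hneg
    rwa [← abs_neg, neg_add, neg_sub']
  obtain ⟨hnonneg, hle⟩ := one_div_sub_one_sub_tanh_sq_div_tanh_mem_Icc hpos
  have hbracket : y / (1 + y ^ 2) ≤ 2 / (1 + y) := by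
    rw [div_le_div_iff₀ (by positivity) (by positivity)]
    nlinarith
  have hdiff := abs_sub_le_of_nonneg_of_le (by positivity : 0 ≤ y / (1 + y ^ 2)) hbracket
    hnonneg (hle.trans (tanh_sq_div_self_le hpos))
  have hregroup : (1 - tanh y ^ 2) / tanh y - 1 / y + y / (1 + y ^ 2) =
      y / (1 + y ^ 2) - (1 / y - (1 - tanh y ^ 2) / tanh y) := by ring
  rwa [hregroup, abs_of_pos hpos]

lemma hasDerivAt_one_add_sq_rpow (r x : ℝ) :
    HasDerivAt (fun z : ℝ => (1 + z ^ 2) ^ r) (2 * r * (x * (1 + x ^ 2) ^ (r - 1))) x := by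
  have hne : 1 + x ^ 2 ≠ 0 := by positivity
  refine (((hasDerivAt_pow 2 x).const_add 1).rpow_const (Or.inl hne)).congr_deriv ?_
  push_cast
  ring

lemma one_add_sq_rpow_sub_half (r x : ℝ) :
    (1 + x ^ 2) ^ (r - 1 / 2) = (1 + x ^ 2) ^ r / √(1 + x ^ 2) := by
  rw [rpow_sub (by positivity), sqrt_eq_rpow]

lemma abs_mul_one_add_sq_rpow_sub_one_le (r x : ℝ) :
    |x| * (1 + x ^ 2) ^ (r - 1) ≤ (1 + x ^ 2) ^ (r - 1 / 2) := by
  have hx : |x| ≤ √(1 + x ^ 2) := abs_le_sqrt (by linarith)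
  calc |x| * (1 + x ^ 2) ^ (r - 1) ≤ √(1 + x ^ 2) * (1 + x ^ 2) ^ (r - 1) := by gcongr
    _ = (1 + x ^ 2) ^ (r - 1 / 2) := by
      rw [sqrt_eq_rpow, ← rpow_add (by positivity)]
      ring_nf

lemma one_add_sq_rpow_div_one_add_abs_le (r x : ℝ) :
    (1 + x ^ 2) ^ r / (1 + |x|) ≤ (1 + x ^ 2) ^ (r - 1 / 2) := by
  have hx : √(1 + x ^ 2) ≤ 1 + |x| := by simpa using sqrt_one_add_norm_sq_le x
  rw [one_add_sq_rpow_sub_half]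
  gcongr

lemma abs_div_one_add_abs_mul_le (a x : ℝ) :
    |a| / (1 + |a * x|) ≤ max 1 |a| / (1 + |x|) := by
  rw [abs_mul, div_le_div_iff₀ (by positivity) (by positivity)]
  have hone : |a| * |x| ≤ max 1 |a| * (|a| * |x|) :=
    le_mul_of_one_le_left (by positivity) (le_max_left _ _)
  linarith [le_max_right 1 |a|]

/-- The profile `√(tanh y / y) ⟨y⟩ ^ (1/2)`, whose dilation by `√μ` is the `μ`-dependent factor
`√T_μ(ξ) (1 + μ ξ²) ^ (1/4)`. -/
noncomputable def tanhProfile (y : ℝ) : ℝ := √(tanh y / y) * (1 + y ^ 2) ^ ((1 : ℝ) / 4)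

lemma tanhProfile_nonneg (y : ℝ) : 0 ≤ tanhProfile y := by
  unfold tanhProfile
  positivity

lemma tanhProfile_le_two (y : ℝ) : tanhProfile y ≤ 2 := by
  rcases eq_or_ne y 0 with rfl | hy
  · simp [tanhProfile]
  have hratio : (tanh y / y) ^ 2 ≤ 1 := by
    rw [sq_le_one_iff_abs_le_one, abs_div]
    exact div_le_one_of_le₀ (abs_tanh_le_abs y) (abs_nonneg y)
  have htanh : (tanh y / y) ^ 2 * y ^ 2 ≤ 1 := by
    rw [← mul_pow, div_mul_cancel₀ _ hy]
    exact (tanh_sq_lt_one y).le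
  have hpow : tanhProfile y ^ 4 = (tanh y / y) ^ 2 * (1 + y ^ 2) := by
    rw [tanhProfile, mul_pow, ← rpow_mul_natCast (by positivity), show 4 = 2 * 2 from rfl,
      pow_mul, sq_sqrt (tanh_div_self_pos hy).le]
    norm_num
  refine le_of_pow_le_pow_left₀ four_ne_zero zero_le_two ?_
  rw [hpow]
  linarith

lemma hasDerivAt_tanhProfile {y : ℝ} (hy : y ≠ 0) :
    HasDerivAt tanhProfile
      (tanhProfile y * (((1 - tanh y ^ 2) / tanh y - 1 / y + y / (1 + y ^ 2)) / 2)) y := by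
  have hratio := tanh_div_self_pos hy
  have htanh : tanh y ≠ 0 := fun h => by simp [h] at hratio
  have hsqrt : HasDerivAt (fun z => √(tanh z / z))
      (√(tanh y / y) * (((1 - tanh y ^ 2) / tanh y - 1 / y) / 2)) y := by
    refine (((hasDerivAt_tanh y).fun_div (hasDerivAt_id' y) hy).sqrt hratio.ne').congr_deriv ?_
    have hsqrt_ne : √(tanh y / y) ≠ 0 := (sqrt_pos.2 hratio).ne'
    rw [div_eq_iff (mul_ne_zero two_ne_zero hsqrt_ne)]
    calc ((1 - tanh y ^ 2) * y - tanh y * 1) / y ^ 2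
        = tanh y / y * ((1 - tanh y ^ 2) / tanh y - 1 / y) := by field_simp
      _ = √(tanh y / y) ^ 2 * ((1 - tanh y ^ 2) / tanh y - 1 / y) := by rw [sq_sqrt hratio.le]
      _ = _ := by ring
  have hrpow : HasDerivAt (fun z : ℝ => (1 + z ^ 2) ^ ((1 : ℝ) / 4))
      ((1 + y ^ 2) ^ ((1 : ℝ) / 4) * (y / (1 + y ^ 2) / 2)) y := by
    refine (hasDerivAt_one_add_sq_rpow (1 / 4) y).congr_deriv ?_
    rw [rpow_sub_one (by positivity)]
    ring
  exact (hsqrt.mul hrpow).congr_deriv (by rw [tanhProfile]; ring)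

lemma abs_deriv_tanhProfile_le {y : ℝ} (hy : y ≠ 0) :
    |deriv tanhProfile y| ≤ 2 / (1 + |y|) := by
  rw [(hasDerivAt_tanhProfile hy).deriv, abs_mul, abs_div, abs_two,
    abs_of_nonneg (tanhProfile_nonneg y)]
  calc _ ≤ 2 * (2 / (1 + |y|) / 2) := by
        gcongr
        · exact tanhProfile_le_two y
        · exact abs_one_sub_tanh_sq_div_tanh_sub_one_div_add_le hy
    _ = 2 / (1 + |y|) := by ring

lemma abs_deriv_comp_mul_left_mul_one_add_sq_rpow_le {g : ℝ → ℝ} {a x M : ℝ} (r : ℝ)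
    (hdiff : DifferentiableAt ℝ g (a * x)) (hg : |g (a * x)| ≤ M)
    (hg' : |deriv g (a * x)| ≤ M / (1 + |a * x|)) :
    |deriv (fun z => g (a * z) * (1 + z ^ 2) ^ r) x| ≤
      M * (max 1 |a| + 2 * |r|) * (1 + x ^ 2) ^ (r - 1 / 2) := by
  have hM : 0 ≤ M := (abs_nonneg _).trans hg
  have hcomp : HasDerivAt (fun z => g (a * z)) (deriv g (a * x) * a) x :=
    hdiff.hasDerivAt.comp x (hasDerivAt_const_mul a)
  have hfst : |deriv g (a * x) * a * (1 + x ^ 2) ^ r| ≤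
      M * max 1 |a| * (1 + x ^ 2) ^ (r - 1 / 2) := by
    rw [abs_mul, abs_mul, abs_of_nonneg (by positivity : 0 ≤ (1 + x ^ 2) ^ r)]
    calc |deriv g (a * x)| * |a| * (1 + x ^ 2) ^ r
        ≤ M / (1 + |a * x|) * |a| * (1 + x ^ 2) ^ r := by gcongr
      _ = M * (|a| / (1 + |a * x|)) * (1 + x ^ 2) ^ r := by ring
      _ ≤ M * (max 1 |a| / (1 + |x|)) * (1 + x ^ 2) ^ r := by
        gcongr ?_ * ?_ * _
        exact abs_div_one_add_abs_mul_le a x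
      _ = M * max 1 |a| * ((1 + x ^ 2) ^ r / (1 + |x|)) := by ring
      _ ≤ M * max 1 |a| * (1 + x ^ 2) ^ (r - 1 / 2) := by
        gcongr
        exact one_add_sq_rpow_div_one_add_abs_le r x
  have hsnd : |g (a * x) * (2 * r * (x * (1 + x ^ 2) ^ (r - 1)))| ≤
      M * (2 * |r|) * (1 + x ^ 2) ^ (r - 1 / 2) := by
    rw [abs_mul, abs_mul, abs_mul, abs_mul, abs_two,
      abs_of_nonneg (by positivity : 0 ≤ (1 + x ^ 2) ^ (r - 1)), mul_assoc M]
    gcongr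
    exact abs_mul_one_add_sq_rpow_sub_one_le r x
  rw [(hcomp.fun_mul (hasDerivAt_one_add_sq_rpow r x)).deriv]
  exact (abs_add_le _ _).trans (by linarith)

lemma sqrt_Tpos_mul_rpow_mul_rpow_eq {μ : ℝ} (hμ : 0 ≤ μ) (r x : ℝ) :
    √(Tpos μ x) * (1 + x ^ 2) ^ r * (1 + μ * x ^ 2) ^ ((1 : ℝ) / 4) =
      tanhProfile (√μ * x) * (1 + x ^ 2) ^ r := by
  rw [Tpos, tanhProfile, mul_pow, sq_sqrt hμ]
  ring

theorem deriv_sqrtT_Js_Jmu_bound_general (s : ℝ) {μ ξ : ℝ} (hμ : 0 < μ) (hξ : ξ ≠ 0) :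
    |deriv (fun x : ℝ => √(Tpos μ x) * (1 + x ^ 2) ^ (s / 2) * (1 + μ * x ^ 2) ^ ((1 : ℝ) / 4)) ξ|
      ≤ 2 * (max 1 √μ + |s|) * (1 + ξ ^ 2) ^ ((s - 1) / 2) := by
  have hy : √μ * ξ ≠ 0 := mul_ne_zero (sqrt_pos.2 hμ).ne' hξ
  have hbound : |tanhProfile (√μ * ξ)| ≤ 2 := by
    rw [abs_of_nonneg (tanhProfile_nonneg _)]
    exact tanhProfile_le_two _
  have hderiv := abs_deriv_comp_mul_left_mul_one_add_sq_rpow_le (s / 2)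
    (hasDerivAt_tanhProfile hy).differentiableAt hbound (abs_deriv_tanhProfile_le hy)
  simp only [sqrt_Tpos_mul_rpow_mul_rpow_eq hμ.le]
  rwa [abs_of_nonneg (sqrt_nonneg μ), abs_div, abs_two, mul_div_cancel₀ _ two_ne_zero,
    ← sub_div] at hderiv

theorem deriv_sqrtT_Js_Jmu_bound (s : ℝ) :
    ∃ C > 0, ∀ μ : ℝ, 0 < μ → μ ≤ 1 → ∀ ξ : ℝ, 0 < ξ →
      |deriv (fun x : ℝ =>
          Real.sqrt (Tpos μ x) * (1 + x ^ 2) ^ (s/2) * (1 + μ * x ^ 2) ^ ((1:ℝ)/4)) ξ| ≤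
        C * (1 + ξ ^ 2) ^ ((s - 1)/2) := by
  refine ⟨2 * (1 + |s|), by positivity, fun μ hμ hμ1 ξ hξ => ?_⟩
  simpa only [max_eq_left (sqrt_le_one.2 hμ1)] using deriv_sqrtT_Js_Jmu_bound_general s hμ hξ.ne'
end

section
/- For every s ∈ ℝ and every n ∈ ℕ there exists a constant C > 0 (depending only on s and n) such that for all μ with 0 < μ ≤ 1 and all ξ > 0, one has ⟨ξ⟩^{n−s} · | dⁿ/dξⁿ ( √(T_μ(ξ))·⟨ξ⟩^{s} ) | ≤ C. (In other words, √(T_μ)·⟨·⟩^{s} belongs to the symbol class S^{s} with seminorms bounded uniformly in μ ∈ (0,1].) -/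
/-!
Since `T_μ(ξ) = T_1(√μ ξ)`, and since composing a symbol of nonnegative order with the dilations
`ξ ↦ r ξ`, `0 < r ≤ 1`, keeps its seminorms bounded, it suffices to see that `√T_1` is a symbol of
order `0` on `(0, ∞)`; the Leibniz rule then takes care of the factor `⟨ξ⟩ ^ s`. On bounded
intervals this holds because `tanh ξ / ξ` extends to a smooth positive function across `ξ = 0`.
Near infinity `√T_1(ξ) = G(e^{-2ξ}) ξ^{-1/2}` with `G(t) = √((1 - t) / (1 + t))` smooth near
`[0, e^{-2}]`, a product of symbols of orders `0` and `-1/2`.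
-/

open Set Real

variable {ι : Type*} {U V : Set ℝ} {n : ℕ} {m m' : ℝ}

/-- The family `f i` lies in the Hörmander symbol class `S ^ m` on `U`, uniformly in `i`, as far as
derivatives of order at most `n` are concerned. The weight `⟨x⟩ ^ a` is written
`(1 + x ^ 2) ^ (a / 2)`. Truncating at `n` makes induction on the number of derivatives possible. -/
structure IsUniformSymbolOn (U : Set ℝ) (n : ℕ) (m : ℝ) (f : ι → ℝ → ℝ) : Prop where
  contDiffAt : ∀ i, ∀ x ∈ U, ContDiffAt ℝ n (f i) x
  exists_bound : ∀ k ≤ n, ∃ C : ℝ, ∀ i, ∀ x ∈ U,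
    |iteratedDeriv k (f i) x| ≤ C * (1 + x ^ 2) ^ ((m - k) / 2)

theorem one_add_sq_rpow_pos (x a : ℝ) : 0 < (1 + x ^ 2) ^ a := by positivity

theorem pow_mul_one_add_sq_rpow_dilate_le {r : ℝ} (hr₀ : 0 ≤ r) (hr₁ : r ≤ 1) (hm : 0 ≤ m)
    (k : ℕ) (x : ℝ) :
    r ^ k * (1 + (r * x) ^ 2) ^ ((m - k) / 2) ≤ (1 + x ^ 2) ^ ((m - k) / 2) := by
  have rpow_split (y : ℝ) :
      (1 + y ^ 2) ^ ((m - k) / 2) = (1 + y ^ 2) ^ (m / 2) / √(1 + y ^ 2) ^ k := by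
    rw [sub_div, rpow_sub (by positivity), rpow_div_two_eq_sqrt (k : ℝ) (by positivity),
      rpow_natCast]
  have hr_sq : r ^ 2 ≤ 1 := pow_le_one₀ hr₀ hr₁
  have bracket_dilate_le : 1 + (r * x) ^ 2 ≤ 1 + x ^ 2 := by
    rw [mul_pow]; nlinarith [sq_nonneg x]
  have mul_bracket_le : r * √(1 + x ^ 2) ≤ √(1 + (r * x) ^ 2) := by
    apply le_sqrt_of_sq_le
    rw [mul_pow, sq_sqrt (by positivity)]
    linarith [mul_pow r x 2]
  rw [rpow_split, rpow_split, ← mul_div_assoc, div_le_div_iff₀ (by positivity) (by positivity)]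
  calc r ^ k * (1 + (r * x) ^ 2) ^ (m / 2) * √(1 + x ^ 2) ^ k
      = (1 + (r * x) ^ 2) ^ (m / 2) * (r * √(1 + x ^ 2)) ^ k := by rw [mul_pow]; ring
    _ ≤ (1 + x ^ 2) ^ (m / 2) * √(1 + (r * x) ^ 2) ^ k := by gcongr

theorem continuousAt_iteratedDeriv_of_contDiffAt {g : ℝ → ℝ} {x : ℝ} (hg : ContDiffAt ℝ n g x)
    {k : ℕ} (hk : k ≤ n) : ContinuousAt (iteratedDeriv k g) x := by
  rw [iteratedDeriv_eq_equiv_comp]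
  exact (LinearIsometryEquiv.continuous _).continuousAt.comp
    (hg.continuousAt_iteratedFDeriv (mod_cast hk))

namespace IsUniformSymbolOn

variable {f g : ι → ℝ → ℝ}

theorem exists_pos_bound (hf : IsUniformSymbolOn U n m f) {k : ℕ} (hk : k ≤ n) :
    ∃ C > 0, ∀ i, ∀ x ∈ U, |iteratedDeriv k (f i) x| ≤ C * (1 + x ^ 2) ^ ((m - k) / 2) := by
  obtain ⟨C, hC⟩ := hf.exists_bound k hk
  refine ⟨max C 1, by positivity, fun i x hx => (hC i x hx).trans ?_⟩
  gcongr
  exact le_max_left C 1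

theorem exists_weighted_bound (hf : IsUniformSymbolOn U n m f) :
    ∃ C > 0, ∀ i, ∀ x ∈ U, (1 + x ^ 2) ^ ((n - m) / 2) * |iteratedDeriv n (f i) x| ≤ C := by
  obtain ⟨C, hC_pos, hC⟩ := hf.exists_pos_bound le_rfl
  refine ⟨C, hC_pos, fun i x hx => ?_⟩
  have weights_cancel : (1 + x ^ 2) ^ ((n - m) / 2) * (1 + x ^ 2) ^ ((m - n) / 2) = 1 := by
    rw [← rpow_add (by positivity), ← add_div, sub_add_sub_cancel, sub_self, zero_div, rpow_zero]
  calc (1 + x ^ 2) ^ ((n - m) / 2) * |iteratedDeriv n (f i) x|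
      ≤ (1 + x ^ 2) ^ ((n - m) / 2) * (C * (1 + x ^ 2) ^ ((m - n) / 2)) := by
        gcongr
        exact hC i x hx
    _ = C := by rw [mul_left_comm, weights_cancel, mul_one]

theorem mono_set (hf : IsUniformSymbolOn V n m f) (hUV : U ⊆ V) : IsUniformSymbolOn U n m f where
  contDiffAt i x hx := hf.contDiffAt i x (hUV hx)
  exists_bound k hk := (hf.exists_bound k hk).imp fun _ hC i x hx => hC i x (hUV hx)

theorem mono_order (hf : IsUniformSymbolOn U n m f) (hm : m ≤ m') :
    IsUniformSymbolOn U n m' f where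
  contDiffAt := hf.contDiffAt
  exists_bound k hk := by
    obtain ⟨C, hC_pos, hC⟩ := hf.exists_pos_bound hk
    refine ⟨C, fun i x hx => (hC i x hx).trans ?_⟩
    gcongr
    nlinarith [sq_nonneg x]

theorem of_succ (hf : IsUniformSymbolOn U (n + 1) m f) : IsUniformSymbolOn U n m f where
  contDiffAt i x hx := (hf.contDiffAt i x hx).of_le (mod_cast n.le_succ)
  exists_bound k hk := hf.exists_bound k (hk.trans n.le_succ)

theorem congr (hU : IsOpen U) (hf : IsUniformSymbolOn U n m f) (hfg : ∀ i, EqOn (g i) (f i) U) :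
    IsUniformSymbolOn U n m g where
  contDiffAt i x hx :=
    (hf.contDiffAt i x hx).congr_of_eventuallyEq ((hfg i).eventuallyEq_of_mem (hU.mem_nhds hx))
  exists_bound k hk := (hf.exists_bound k hk).imp fun _ hC i x hx => by
    rw [(hfg i).iteratedDeriv_of_isOpen hU k hx]
    exact hC i x hx

theorem union (hU : IsUniformSymbolOn U n m f) (hV : IsUniformSymbolOn V n m f) :
    IsUniformSymbolOn (U ∪ V) n m f where
  contDiffAt i x hx := hx.elim (hU.contDiffAt i x) (hV.contDiffAt i x)
  exists_bound k hk := by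
    obtain ⟨C, hC⟩ := hU.exists_bound k hk
    obtain ⟨D, hD⟩ := hV.exists_bound k hk
    refine ⟨max C D, fun i x hx => ?_⟩
    rcases hx with hx | hx
    · refine (hC i x hx).trans ?_
      gcongr
      exact le_max_left C D
    · refine (hD i x hx).trans ?_
      gcongr
      exact le_max_right C D

theorem zero_iff : IsUniformSymbolOn U 0 m f ↔ (∀ i, ∀ x ∈ U, ContDiffAt ℝ 0 (f i) x) ∧
    ∃ C : ℝ, ∀ i, ∀ x ∈ U, |f i x| ≤ C * (1 + x ^ 2) ^ (m / 2) := by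
  refine ⟨fun hf => ⟨hf.contDiffAt, by simpa using hf.exists_bound 0 le_rfl⟩, fun hf => ⟨hf.1, ?_⟩⟩
  simpa using hf.2

theorem succ_iff : IsUniformSymbolOn U (n + 1) m f ↔
    (∀ i, ∀ x ∈ U, ContDiffAt ℝ (n + 1) (f i) x) ∧
    (∃ C : ℝ, ∀ i, ∀ x ∈ U, |f i x| ≤ C * (1 + x ^ 2) ^ (m / 2)) ∧
    IsUniformSymbolOn U n (m - 1) fun i => deriv (f i) := by
  have order_succ (k : ℕ) : m - (k + 1 : ℕ) = m - 1 - k := by push_cast; ring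
  constructor
  · intro hf
    refine ⟨hf.contDiffAt, by simpa using hf.exists_bound 0 n.succ.zero_le,
      fun i x hx => (hf.contDiffAt i x hx).derivWithin le_rfl, fun k hk => ?_⟩
    simpa only [iteratedDeriv_succ', order_succ] using hf.exists_bound (k + 1) (by lia)
  · rintro ⟨hf, hbound, hderiv⟩
    refine ⟨hf, fun k hk => ?_⟩
    cases k with
    | zero => simpa using hbound
    | succ k =>
      simpa only [iteratedDeriv_succ', order_succ] using hderiv.exists_bound k (by lia)

theorem const_mul (hf : IsUniformSymbolOn U n m f) (c : ℝ) :
    IsUniformSymbolOn U n m fun i x => c * f i x where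
  contDiffAt i x hx := contDiffAt_const.mul (hf.contDiffAt i x hx)
  exists_bound k hk := by
    obtain ⟨C, hC⟩ := hf.exists_bound k hk
    refine ⟨|c| * C, fun i x hx => ?_⟩
    rw [iteratedDeriv_const_mul_field, abs_mul, mul_assoc]
    gcongr
    exact hC i x hx

theorem exists_bound_iteratedDeriv_mul (hf : IsUniformSymbolOn U n m f)
    (hg : IsUniformSymbolOn U n m' g) {j k : ℕ} (hj : j ≤ k) (hk : k ≤ n) :
    ∃ C : ℝ, ∀ i, ∀ x ∈ U, |iteratedDeriv j (f i) x * iteratedDeriv (k - j) (g i) x| ≤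
      C * (1 + x ^ 2) ^ ((m + m' - k) / 2) := by
  obtain ⟨C, hC⟩ := hf.exists_bound j (hj.trans hk)
  obtain ⟨D, hD⟩ := hg.exists_bound (k - j) ((k.sub_le j).trans hk)
  refine ⟨C * D, fun i x hx => ?_⟩
  rw [abs_mul]
  calc |iteratedDeriv j (f i) x| * |iteratedDeriv (k - j) (g i) x|
      ≤ C * (1 + x ^ 2) ^ ((m - j) / 2) * (D * (1 + x ^ 2) ^ ((m' - (k - j : ℕ)) / 2)) :=
        mul_le_mul (hC i x hx) (hD i x hx) (abs_nonneg _) ((abs_nonneg _).trans (hC i x hx))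
    _ = C * D * (1 + x ^ 2) ^ ((m - j) / 2 + (m' - (k - j : ℕ)) / 2) := by
        rw [rpow_add (by positivity)]; ring
    _ = C * D * (1 + x ^ 2) ^ ((m + m' - k) / 2) := by rw [Nat.cast_sub hj]; ring_nf

theorem mul (hf : IsUniformSymbolOn U n m f) (hg : IsUniformSymbolOn U n m' g) :
    IsUniformSymbolOn U n (m + m') fun i x => f i x * g i x where
  contDiffAt i x hx := (hf.contDiffAt i x hx).mul (hg.contDiffAt i x hx)
  exists_bound k hk := by
    choose! C hC using fun j (hj : j ≤ k) => hf.exists_bound_iteratedDeriv_mul hg hj hk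
    refine ⟨∑ j ∈ Finset.range (k + 1), k.choose j * C j, fun i x hx => ?_⟩
    have hle : (k : WithTop ℕ∞) ≤ n := mod_cast hk
    have leibniz := iteratedDeriv_mul ((hf.contDiffAt i x hx).of_le hle)
      ((hg.contDiffAt i x hx).of_le hle)
    calc |iteratedDeriv k (fun x => f i x * g i x) x|
        = |∑ j ∈ Finset.range (k + 1),
            k.choose j * iteratedDeriv j (f i) x * iteratedDeriv (k - j) (g i) x| :=
          congrArg abs leibniz
      _ ≤ ∑ j ∈ Finset.range (k + 1),
            |k.choose j * iteratedDeriv j (f i) x * iteratedDeriv (k - j) (g i) x| :=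
          Finset.abs_sum_le_sum_abs _ _
      _ ≤ ∑ j ∈ Finset.range (k + 1), k.choose j * C j * (1 + x ^ 2) ^ ((m + m' - k) / 2) := by
          refine Finset.sum_le_sum fun j hj => ?_
          rw [mul_assoc, abs_mul, Nat.abs_cast, mul_assoc]
          gcongr
          exact hC j (Finset.mem_range_succ_iff.1 hj) i x hx
      _ = _ := (Finset.sum_mul _ _ _).symm

theorem of_contDiffAt_of_isCompact {K : Set ℝ} {φ : ℝ → ℝ} (hK : IsCompact K) (hUK : U ⊆ K)
    (hφ : ∀ x ∈ K, ContDiffAt ℝ n φ x) (m : ℝ) : IsUniformSymbolOn U n m fun _ : ι => φ where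
  contDiffAt _ x hx := hφ x (hUK hx)
  exists_bound k hk := by
    have hcont : ContinuousOn (fun x => iteratedDeriv k φ x / (1 + x ^ 2) ^ ((m - k) / 2)) K := by
      refine ContinuousOn.div (fun x hx => ?_) ?_ fun x _ => (one_add_sq_rpow_pos x _).ne'
      · exact (continuousAt_iteratedDeriv_of_contDiffAt (hφ x hx) hk).continuousWithinAt
      · exact ContinuousOn.rpow_const (by fun_prop) fun x _ => Or.inl (by positivity)
    obtain ⟨C, hC⟩ := hK.exists_bound_of_continuousOn hcont
    refine ⟨C, fun _ x hx => ?_⟩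
    have hCx := hC x (hUK hx)
    rwa [norm_eq_abs, abs_div, abs_of_pos (one_add_sq_rpow_pos x _),
      div_le_iff₀ (one_add_sq_rpow_pos x _)] at hCx

theorem comp_of_isCompact {K : Set ℝ} {φ : ℝ → ℝ} (hU : IsOpen U)
    (hf : IsUniformSymbolOn U n 0 f) (hK : IsCompact K) (hfK : ∀ i, MapsTo (f i) U K)
    (hφ : ∀ t ∈ K, ContDiffAt ℝ n φ t) : IsUniformSymbolOn U n 0 fun i x => φ (f i x) := by
  have bounded_comp {ψ : ℝ → ℝ} (hψ : ContinuousOn ψ K) :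
      ∃ C : ℝ, ∀ i, ∀ x ∈ U, |ψ (f i x)| ≤ C * (1 + x ^ 2) ^ ((0 : ℝ) / 2) := by
    obtain ⟨C, hC⟩ := hK.exists_bound_of_continuousOn hψ
    exact ⟨C, fun i x hx => by simpa using hC _ (hfK i hx)⟩
  induction n generalizing φ with
  | zero =>
    exact zero_iff.2 ⟨fun i x hx => (hφ _ (hfK i hx)).comp x (hf.contDiffAt i x hx),
      bounded_comp fun t ht => (hφ t ht).continuousAt.continuousWithinAt⟩
  | succ n ih =>
    refine succ_iff.2 ⟨fun i x hx => (hφ _ (hfK i hx)).comp x (hf.contDiffAt i x hx),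
      bounded_comp fun t ht => (hφ t ht).continuousAt.continuousWithinAt, ?_⟩
    have hφ' : IsUniformSymbolOn U n 0 fun i x => deriv φ (f i x) :=
      ih hf.of_succ fun t ht => (hφ t ht).derivWithin le_rfl
    have hprod := hφ'.mul (succ_iff.1 hf).2.2
    rw [zero_add] at hprod
    refine hprod.congr hU fun i x hx => ?_
    exact deriv_comp x ((hφ _ (hfK i hx)).differentiableAt (by simp))
      ((hf.contDiffAt i x hx).differentiableAt (by simp))

theorem comp_dilation {r : ι → ℝ} (hU : IsOpen U) (hr : ∀ i, r i ∈ Icc 0 1)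
    (hrU : ∀ i, MapsTo (r i * ·) U U) (hm : 0 ≤ m) (hf : IsUniformSymbolOn U n m f) :
    IsUniformSymbolOn U n m fun i x => f i (r i * x) where
  contDiffAt i x hx := (hf.contDiffAt i _ (hrU i hx)).comp x (by fun_prop)
  exists_bound k hk := by
    obtain ⟨C, hC_pos, hC⟩ := hf.exists_pos_bound hk
    refine ⟨C, fun i x hx => ?_⟩
    have hcontDiffOn : ContDiffOn ℝ k (f i) U := fun y hy =>
      ((hf.contDiffAt i y hy).of_le (mod_cast hk)).contDiffWithinAt
    have chain_rule :
        iteratedDeriv k (fun x => f i (r i * x)) x = r i ^ k * iteratedDeriv k (f i) (r i * x) := by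
      rw [← iteratedDerivWithin_of_isOpen hU hx, ← iteratedDerivWithin_of_isOpen hU (hrU i hx)]
      exact iteratedDerivWithin_comp_const_smul hx hU.uniqueDiffOn hcontDiffOn (r i) (hrU i)
    obtain ⟨hr₀, hr₁⟩ := hr i
    calc |iteratedDeriv k (fun x => f i (r i * x)) x|
        = r i ^ k * |iteratedDeriv k (f i) (r i * x)| := by
          rw [chain_rule, abs_mul, abs_of_nonneg (pow_nonneg hr₀ k)]
      _ ≤ r i ^ k * (C * (1 + (r i * x) ^ 2) ^ ((m - k) / 2)) := by
          gcongr
          exact hC i _ (hrU i hx)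
      _ = C * (r i ^ k * (1 + (r i * x) ^ 2) ^ ((m - k) / 2)) := mul_left_comm _ _ _
      _ ≤ C * (1 + x ^ 2) ^ ((m - k) / 2) := by
          gcongr
          exact pow_mul_one_add_sq_rpow_dilate_le hr₀ hr₁ hm k x

end IsUniformSymbolOn

theorem isUniformSymbolOn_id : IsUniformSymbolOn univ n 1 fun (_ : ι) x => x where
  contDiffAt _ _ _ := contDiffAt_id
  exists_bound k _ := by
    refine ⟨1, fun _ x _ => ?_⟩
    rw [iteratedDeriv_fun_id, one_mul]
    split_ifs with h₀ h₁
    · rw [h₀, Nat.cast_zero, sub_zero, ← sqrt_eq_rpow]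
      exact abs_le_sqrt (by linarith)
    · simp [h₁]
    · rw [abs_zero]
      positivity

theorem isUniformSymbolOn_one_add_sq_rpow (s : ℝ) :
    IsUniformSymbolOn univ n s fun (_ : ι) x => (1 + x ^ 2) ^ (s / 2) := by
  have hcontDiff (s : ℝ) (n : ℕ) (x : ℝ) :
      ContDiffAt ℝ n (fun x : ℝ => (1 + x ^ 2) ^ (s / 2)) x :=
    ContDiffAt.rpow_const_of_ne (by fun_prop) (by positivity)
  have hbound (s : ℝ) : ∃ C : ℝ, ∀ (_ : ι), ∀ x ∈ univ,
      |(1 + x ^ 2) ^ (s / 2)| ≤ C * (1 + x ^ 2) ^ (s / 2) :=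
    ⟨1, fun _ x _ => by rw [abs_of_pos (one_add_sq_rpow_pos x _), one_mul]⟩
  have hderiv (s : ℝ) : deriv (fun x : ℝ => (1 + x ^ 2) ^ (s / 2)) =
      fun x => s * (x * (1 + x ^ 2) ^ ((s - 2) / 2)) := by
    funext x
    have hbase : HasDerivAt (fun x : ℝ => 1 + x ^ 2) (2 * x) x := by
      simpa using (hasDerivAt_pow 2 x).const_add 1
    rw [(hbase.rpow_const (p := s / 2) (Or.inl (by positivity))).deriv,
      sub_div, div_self two_ne_zero]
    ring
  induction n generalizing s with
  | zero => exact IsUniformSymbolOn.zero_iff.2 ⟨fun _ x _ => hcontDiff s 0 x, hbound s⟩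
  | succ n ih =>
    refine IsUniformSymbolOn.succ_iff.2 ⟨fun _ x _ => hcontDiff s (n + 1) x, hbound s, ?_⟩
    rw [hderiv, show s - 1 = 1 + (s - 2) by ring]
    exact (isUniformSymbolOn_id.mul (ih (s - 2))).const_mul s

theorem exists_rpow_le_mul_one_add_sq_rpow {δ : ℝ} (hδ : 0 < δ) (a : ℝ) :
    ∃ C : ℝ, ∀ x > δ, x ^ a ≤ C * (1 + x ^ 2) ^ (a / 2) := by
  have rpow_eq {x : ℝ} (hx : δ < x) : x ^ a = (x ^ 2) ^ (a / 2) := by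
    rw [rpow_div_two_eq_sqrt _ (sq_nonneg x), sqrt_sq (hδ.trans hx).le]
  rcases le_total 0 a with ha | ha
  · refine ⟨1, fun x hx => ?_⟩
    rw [rpow_eq hx, one_mul]
    gcongr
    linarith
  · refine ⟨((1 + δ⁻¹ ^ 2)⁻¹) ^ (a / 2), fun x hx => ?_⟩
    have hx₀ : 0 < x := hδ.trans hx
    have hsq : (1 + δ⁻¹ ^ 2)⁻¹ * (1 + x ^ 2) ≤ x ^ 2 := by
      rw [inv_mul_le_iff₀ (by positivity)]
      have one_le_sq : 1 ≤ (δ⁻¹ * x) ^ 2 :=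
        one_le_pow₀ (by rw [← div_eq_inv_mul, one_le_div hδ]; exact hx.le)
      linarith [mul_pow δ⁻¹ x 2]
    rw [rpow_eq hx, ← mul_rpow (by positivity) (by positivity)]
    exact rpow_le_rpow_of_nonpos (by positivity) hsq (by linarith)

theorem isUniformSymbolOn_rpow {δ : ℝ} (hδ : 0 < δ) (a : ℝ) :
    IsUniformSymbolOn (Ioi δ) n a fun (_ : ι) x => x ^ a where
  contDiffAt _ x hx := contDiffAt_rpow_const_of_ne (hδ.trans hx).ne'
  exists_bound k _ := by
    obtain ⟨C, hC⟩ := exists_rpow_le_mul_one_add_sq_rpow hδ (a - k)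
    refine ⟨|(descPochhammer ℝ k).eval a| * C, fun _ x hx => ?_⟩
    rw [iteratedDeriv_eq_iterate, iter_deriv_rpow_const, abs_mul,
      abs_of_pos (rpow_pos_of_pos (hδ.trans hx) _), mul_assoc]
    gcongr
    exact hC x hx

theorem exists_exp_neg_mul_le_mul_one_add_sq_rpow {c : ℝ} (hc : 0 < c) (a : ℝ) :
    ∃ C : ℝ, ∀ x ≥ 0, exp (-c * x) ≤ C * (1 + x ^ 2) ^ a := by
  obtain ⟨N, hN⟩ := exists_nat_ge (-a)
  refine ⟨exp c * (2 * N).factorial / c ^ (2 * N), fun x hx => ?_⟩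
  have weight_le : ((1 + x ^ 2) ^ a)⁻¹ ≤ (1 + x) ^ (2 * N) := calc
    ((1 + x ^ 2) ^ a)⁻¹ = (1 + x ^ 2) ^ (-a) := (rpow_neg (by positivity) a).symm
    _ ≤ (1 + x ^ 2) ^ (N : ℝ) := rpow_le_rpow_of_exponent_le (by nlinarith) hN
    _ = (1 + x ^ 2) ^ N := rpow_natCast _ _
    _ ≤ ((1 + x) ^ 2) ^ N := by gcongr; nlinarith
    _ = (1 + x) ^ (2 * N) := (pow_mul _ 2 N).symm
  have pow_le : (1 + x) ^ (2 * N) ≤ exp (c * (1 + x)) * (2 * N).factorial / c ^ (2 * N) := by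
    rw [le_div_iff₀ (by positivity), ← mul_pow, mul_comm (1 + x), ← div_le_iff₀ (by positivity)]
    exact pow_div_factorial_le_exp _ (by positivity) _
  rw [← div_le_iff₀ (one_add_sq_rpow_pos x a), div_eq_mul_inv]
  calc exp (-c * x) * ((1 + x ^ 2) ^ a)⁻¹
      ≤ exp (-c * x) * (exp (c * (1 + x)) * (2 * N).factorial / c ^ (2 * N)) := by
        gcongr
        exact weight_le.trans pow_le
    _ = exp (-c * x + c * (1 + x)) * (2 * N).factorial / c ^ (2 * N) := by rw [exp_add]; ring
    _ = exp c * (2 * N).factorial / c ^ (2 * N) := by ring_nf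

theorem isUniformSymbolOn_exp_neg_mul {c : ℝ} (hc : 0 < c) (m : ℝ) :
    IsUniformSymbolOn (Ioi 0) n m fun (_ : ι) x => exp (-c * x) where
  contDiffAt _ _ _ := by fun_prop
  exists_bound k _ := by
    obtain ⟨C, hC⟩ := exists_exp_neg_mul_le_mul_one_add_sq_rpow hc ((m - k) / 2)
    refine ⟨|(-c) ^ k| * C, fun _ x hx => ?_⟩
    rw [iteratedDeriv_exp_const_mul, abs_mul, abs_exp, mul_assoc]
    gcongr
    exact hC x (mem_Ioi.1 hx).le

theorem analyticAt_dslope {𝕜 E : Type*} [NontriviallyNormedField 𝕜] [NormedAddCommGroup E]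
    [NormedSpace 𝕜 E] {f : 𝕜 → E} {a x : 𝕜} (hf : AnalyticAt 𝕜 f x) :
    AnalyticAt 𝕜 (dslope f a) x := by
  rcases eq_or_ne x a with rfl | hx
  · obtain ⟨p, hp⟩ := hf
    exact hp.has_fpower_series_dslope_fslope.analyticAt
  · have hslope : AnalyticAt 𝕜 (fun y => (y - a)⁻¹ • (f y - f a)) x := by
      refine AnalyticAt.smul (AnalyticAt.inv (by fun_prop) (sub_ne_zero.2 hx)) (by fun_prop)
    exact hslope.congr (dslope_eventuallyEq_slope_of_ne f hx).symm

theorem tanh_pos_s15 {x : ℝ} (hx : 0 < x) : 0 < tanh x := by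
  rw [tanh_eq_sinh_div_cosh]
  exact div_pos (sinh_pos_iff.2 hx) (cosh_pos x)

theorem analyticAt_tanh (x : ℝ) : AnalyticAt ℝ tanh x := by
  rw [funext tanh_eq_sinh_div_cosh]
  exact analyticAt_sinh.div analyticAt_cosh (cosh_pos x).ne'

theorem hasDerivAt_tanh_zero : HasDerivAt tanh 1 0 := by
  rw [funext tanh_eq_sinh_div_cosh]
  simpa using (hasDerivAt_sinh 0).fun_div (hasDerivAt_cosh 0) (cosh_pos 0).ne'

theorem dslope_tanh_zero_of_ne {x : ℝ} (hx : x ≠ 0) : dslope tanh 0 x = tanh x / x := by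
  rw [dslope_of_ne _ hx, slope_def_field, tanh_zero, sub_zero, sub_zero]

theorem dslope_tanh_zero_pos {x : ℝ} (hx : 0 ≤ x) : 0 < dslope tanh 0 x := by
  rcases hx.eq_or_lt with rfl | hx
  · rw [dslope_same, hasDerivAt_tanh_zero.deriv]
    exact one_pos
  · rw [dslope_tanh_zero_of_ne hx.ne']
    exact div_pos (tanh_pos_s15 hx) hx

theorem tanh_eq_exp_neg_two_mul (x : ℝ) : tanh x = (1 - exp (-2 * x)) / (1 + exp (-2 * x)) := by
  have hexp : exp (-2 * x) = exp (-x) * exp (-x) := by rw [← exp_add]; ring_nf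
  have hinv : exp x * exp (-x) = 1 := by rw [← exp_add, add_neg_cancel, exp_zero]
  rw [tanh_eq, hexp, div_eq_div_iff (by positivity) (by positivity)]
  linear_combination 2 * exp (-x) * hinv

theorem isUniformSymbolOn_sqrt_tanh_div_self_Ioo (b : ℝ) :
    IsUniformSymbolOn (Ioo 0 b) n m fun (_ : ι) x => √(tanh x / x) := by
  have hsmooth : ∀ x ∈ Icc 0 b, ContDiffAt ℝ n (fun x => √(dslope tanh 0 x)) x := fun x hx =>
    (analyticAt_dslope (analyticAt_tanh x)).contDiffAt.sqrt (dslope_tanh_zero_pos hx.1).ne'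
  refine (IsUniformSymbolOn.of_contDiffAt_of_isCompact isCompact_Icc Ioo_subset_Icc_self
    hsmooth m).congr isOpen_Ioo fun _ x hx => ?_
  simp only [dslope_tanh_zero_of_ne hx.1.ne']

theorem isUniformSymbolOn_sqrt_tanh {δ : ℝ} (hδ : 0 < δ) :
    IsUniformSymbolOn (Ioi δ) n 0 fun (_ : ι) x => √(tanh x) := by
  have hexp : IsUniformSymbolOn (Ioi δ) n 0 fun (_ : ι) x => exp (-2 * x) :=
    (isUniformSymbolOn_exp_neg_mul two_pos 0).mono_set (Ioi_subset_Ioi hδ.le)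
  have hmaps : MapsTo (fun x => exp (-2 * x)) (Ioi δ) (Icc 0 (exp (-2 * δ))) := fun x hx =>
    ⟨(exp_pos _).le, exp_le_exp.2 (by linarith [mem_Ioi.1 hx])⟩
  have hsmooth : ∀ t ∈ Icc 0 (exp (-2 * δ)), ContDiffAt ℝ n (fun t => √((1 - t) / (1 + t))) t := by
    intro t ht
    have ht_lt : t < 1 := ht.2.trans_lt (exp_lt_one_iff.2 (by linarith))
    have hnum : 0 < 1 - t := by linarith
    have hden : 0 < 1 + t := by linarith [ht.1]
    exact ContDiffAt.sqrt (ContDiffAt.div (by fun_prop) (by fun_prop) hden.ne')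
      (div_pos hnum hden).ne'
  refine (hexp.comp_of_isCompact isOpen_Ioi isCompact_Icc (fun _ => hmaps) hsmooth).congr
    isOpen_Ioi fun _ x _ => ?_
  simp only [tanh_eq_exp_neg_two_mul]

theorem isUniformSymbolOn_sqrt_tanh_div_self :
    IsUniformSymbolOn (Ioi 0) n (-1 / 2) fun (_ : ι) x => √(tanh x / x) := by
  have near_infinity : IsUniformSymbolOn (Ioi 1) n (-1 / 2) fun (_ : ι) x => √(tanh x / x) := by
    have hprod := (isUniformSymbolOn_sqrt_tanh (ι := ι) (n := n) one_pos).mul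
      (isUniformSymbolOn_rpow one_pos (-1 / 2))
    rw [zero_add] at hprod
    refine hprod.congr isOpen_Ioi fun _ x hx => ?_
    have hx₀ : 0 ≤ x := zero_le_one.trans (mem_Ioi.1 hx).le
    change √(tanh x / x) = √(tanh x) * x ^ (-1 / 2 : ℝ)
    rw [sqrt_div' _ hx₀, neg_div, rpow_neg hx₀, ← sqrt_eq_rpow, div_eq_mul_inv]
  have hcover : Ioi (0 : ℝ) ⊆ Ioo 0 2 ∪ Ioi 1 := fun x hx =>
    (lt_or_ge x 2).imp (fun h => ⟨hx, h⟩) fun h => one_lt_two.trans_le h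
  exact ((isUniformSymbolOn_sqrt_tanh_div_self_Ioo 2).union near_infinity).mono_set hcover

theorem isUniformSymbolOn_sqrt_Tpos :
    IsUniformSymbolOn (Ioi 0) n 0 fun (μ : Ioc (0 : ℝ) 1) x => √(Tpos μ x) :=
  (isUniformSymbolOn_sqrt_tanh_div_self.mono_order (by norm_num)).comp_dilation
    (r := fun μ : Ioc (0 : ℝ) 1 => √μ) isOpen_Ioi
    (fun μ => ⟨sqrt_nonneg _, sqrt_le_one.2 μ.2.2⟩)
    (fun μ _ hx => mul_pos (sqrt_pos.2 μ.2.1) hx) le_rfl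

theorem sqrtT_Js_symbol_class (s : ℝ) (n : ℕ) :
    ∃ C > 0, ∀ μ : ℝ, 0 < μ → μ ≤ 1 → ∀ ξ : ℝ, 0 < ξ →
      (1 + ξ ^ 2) ^ (((n : ℝ) - s)/2) *
        |iteratedDeriv n (fun x => Real.sqrt (Tpos μ x) * (1 + x ^ 2) ^ (s/2)) ξ| ≤ C := by
  have hsymbol : IsUniformSymbolOn (Ioi 0) n s
      fun (μ : Ioc (0 : ℝ) 1) x => √(Tpos μ x) * (1 + x ^ 2) ^ (s / 2) := by
    simpa only [zero_add] using isUniformSymbolOn_sqrt_Tpos.mul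
      ((isUniformSymbolOn_one_add_sq_rpow s).mono_set (subset_univ _))
  obtain ⟨C, hC_pos, hC⟩ := hsymbol.exists_weighted_bound
  exact ⟨C, hC_pos, fun μ hμ₀ hμ₁ ξ hξ => hC ⟨μ, hμ₀, hμ₁⟩ ξ hξ⟩
end
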